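/- Let L be an integer with 5 ≤ L ≤ 10. Then for every integer N ≥ L(L+3)/2 + 2, the number of partitions of N lying in C*_{L,2} is strictly greater than the number of partitions of N lying in D_{L,2}. -/

import Mathlib

/-- `D_{L,2}`: nonempty partitions with all parts in `{3, ..., L+2}`. -/
def InD2 (L : ℕ) {N : ℕ} (p : N.Partition) : Prop :=
  p.parts ≠ 0 ∧ ∀ x ∈ p.parts, 3 ≤ x ∧ x ≤ L + 2

/-- `C*_{L,2}`: partitions with smallest part `2`, all parts `≤ L+2`, and no part equal to `L`. -/
def InCStar2 (L : ℕ) {N : ℕ} (p : N.Partition) : Prop :=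
  2 ∈ p.parts ∧ (∀ x ∈ p.parts, 2 ≤ x ∧ x ≤ L + 2) ∧ L ∉ p.parts

/-!
The difference `|C*_{L,2}| - |D_{L,2}|` has the generating function
`W_L = (2X² - 1 - X^(L+2)) / ((1 - X²)(1 - X³) ⋯ (1 - X^(L+2)))`, and `W_(L+1) = W_L + X^(L+2) U_L`
for a series `U_L` whose only negative coefficient can be that of `X`, which is at least `-2`. Going
from `L` to `L + 1` can thus lower only the coefficient of `X^(L+3)`, by at most `2`. The earlier
steps can only have raised this coefficient, so that it is still at least `3`, as all coefficients
of `W_5` from degree `16` on are. The same bookkeeping, with other constants, bounds the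
coefficients of `U_L`.

For `L = 5`, if the coefficients of `F` are nonnegative from some degree on, a lower bound for those
of `F / (1 - X^m)` has to be checked in a finite window of degrees only. The factors `1 - X^m` are
put in one after the other, starting from the denominator `(1 - X²)(1 - X³)(1 - X⁵)`, where an
explicit decomposition shows eventual nonnegativity.
-/

open Finset PowerSeries

/-- The generating function of the partitions with all parts in `S`, which is
`∏ a ∈ S, 1 / (1 - X ^ a)` when `0 ∉ S`. -/
noncomputable def partSeries (S : Finset ℕ) : ℤ⟦X⟧ :=
  mk fun n => (#(Nat.Partition.restricted n (· ∈ S)) : ℤ)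

theorem coeff_partSeries_nonneg (S : Finset ℕ) (n : ℕ) : 0 ≤ coeff n (partSeries S) := by
  simp [partSeries]

theorem constantCoeff_partSeries (S : Finset ℕ) : constantCoeff (partSeries S) = 1 := by
  simp [partSeries, Nat.Partition.restricted, Nat.Partition.partition_zero_parts]

open PowerSeries.WithPiTopology in
theorem partSeries_mul_prod {S : Finset ℕ} (h0 : 0 ∉ S) :
    partSeries S * ∏ a ∈ S, (1 - X ^ a) = 1 := by
  let _ : TopologicalSpace ℤ := ⊥
  have factor (a : ℕ) (ha : a ∈ S) : (∑' j : ℕ, (X : ℤ⟦X⟧) ^ (a * j)) * (1 - X ^ a) = 1 := by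
    simp_rw [pow_mul]
    exact tsum_pow_mul_one_sub_of_constantCoeff_eq_zero
      (by simpa using fun h : a = 0 => h0 (h ▸ ha))
  have euler : partSeries S = ∏ a ∈ S, ∑' j : ℕ, (X : ℤ⟦X⟧) ^ (a * j) := by
    rw [partSeries, Nat.Partition.powerSeriesMk_card_restricted_eq_tprod,
      tprod_eq_prod (s := S.image (· - 1))]
    · rw [Finset.prod_image]
      · refine prod_congr rfl fun a ha => ?_
        have : a ≠ 0 := fun h => h0 (h ▸ ha)
        rw [show a - 1 + 1 = a by omega, if_pos ha]
      · intro a ha b hb hab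
        have : a ≠ 0 := fun h => h0 (h ▸ ha)
        have : b ≠ 0 := fun h => h0 (h ▸ hb)
        simp only at hab
        omega
    · intro i hi
      exact if_neg fun h => hi (mem_image.2 ⟨i + 1, h, rfl⟩)
  rw [euler, ← prod_mul_distrib, prod_congr rfl factor, prod_const_one]

theorem partSeries_erase {S : Finset ℕ} {a : ℕ} (h0 : 0 ∉ S) (ha : a ∈ S) :
    partSeries (S.erase a) = (1 - X ^ a) * partSeries S := by
  refine left_inv_eq_right_inv (partSeries_mul_prod fun h => h0 (mem_of_mem_erase h)) ?_
  rw [← mul_assoc, prod_erase_mul S _ ha, mul_comm, partSeries_mul_prod h0]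

theorem partSeries_eq_mul_insert {S : Finset ℕ} {a : ℕ} (h0 : 0 ∉ insert a S) (ha : a ∉ S) :
    partSeries S = (1 - X ^ a) * partSeries (insert a S) := by
  rw [← partSeries_erase h0 (mem_insert_self a S), erase_insert ha]

theorem natCard_parts_subset (S : Finset ℕ) (N : ℕ) :
    (Nat.card {p : N.Partition // ∀ x ∈ p.parts, x ∈ S} : ℤ) = coeff N (partSeries S) := by
  rw [Nat.subtype_card (Nat.Partition.restricted N (· ∈ S)) (by simp [Nat.Partition.restricted]),
    partSeries, coeff_mk]

theorem natCard_parts_subset_mem {S : Finset ℕ} {a : ℕ} (h0 : 0 ∉ S) (ha : a ∈ S) (N : ℕ) :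
    (Nat.card {p : N.Partition // a ∈ p.parts ∧ ∀ x ∈ p.parts, x ∈ S} : ℤ) =
      coeff N (X ^ a * partSeries S) := by
  let R (T : Finset ℕ) := Nat.Partition.restricted N (· ∈ T)
  have hsub : R (S.erase a) ⊆ R S :=
    monotone_filter_right _ fun _ _ h x hx => mem_of_mem_erase (h x hx)
  have hdiff (p : N.Partition) :
      p ∈ R S \ R (S.erase a) ↔ a ∈ p.parts ∧ ∀ x ∈ p.parts, x ∈ S := by
    simp only [R, Nat.Partition.restricted, mem_filter_univ, mem_sdiff, mem_erase]
    grind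
  have hX : X ^ a * partSeries S = partSeries S - partSeries (S.erase a) := by
    rw [partSeries_erase h0 ha]; ring
  rw [Nat.subtype_card _ hdiff, cast_card_sdiff hsub, hX, map_sub, partSeries, partSeries,
    coeff_mk, coeff_mk]

/-- The generating function `W_L` of `|C*_{L,2}| - |D_{L,2}|`, except for its constant coefficient,
which is `-1` instead of `0` since the empty partition does not lie in `D_{L,2}`. -/
noncomputable def surplus (L : ℕ) : ℤ⟦X⟧ :=
  (2 * X ^ 2 - 1 - X ^ (L + 2)) * partSeries (Icc 2 (L + 2))

theorem natCard_inCStar2_sub_natCard_inD2 {L N : ℕ} (hL : 3 ≤ L) (hN : N ≠ 0) :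
    (Nat.card {p : N.Partition // InCStar2 L p} - Nat.card {p : N.Partition // InD2 L p} : ℤ) =
      coeff N (surplus L) := by
  have hD (p : N.Partition) : InD2 L p ↔ ∀ x ∈ p.parts, x ∈ (Icc 2 (L + 2)).erase 2 := by
    have hne : p.parts ≠ 0 := fun h => hN (by simpa [h] using p.parts_sum.symm)
    simp only [InD2, mem_erase, mem_Icc]
    grind
  have hC (p : N.Partition) :
      InCStar2 L p ↔ 2 ∈ p.parts ∧ ∀ x ∈ p.parts, x ∈ (Icc 2 (L + 2)).erase L := by
    simp only [InCStar2, mem_erase, mem_Icc]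
    grind
  have h0 : 0 ∉ Icc 2 (L + 2) := by simp
  simp only [hC, hD]
  rw [natCard_parts_subset_mem (by simp) (by simp; omega), natCard_parts_subset,
    partSeries_erase h0 (by simp; omega), partSeries_erase h0 (by simp), ← map_sub, surplus]
  congr 1
  ring

theorem partSeries_Icc_succ {m M : ℕ} (hm : 0 < m) (h : m ≤ M + 1) :
    (1 - X ^ (M + 1)) * partSeries (Icc m (M + 1)) = partSeries (Icc m M) := by
  rw [← partSeries_erase (by simp; omega) (by simp [h])]
  congr 1
  ext x
  simp only [mem_erase, mem_Icc]
  omega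

/-- The generating function of `p(n) - p(n - 1)`, where `p(n)` counts the partitions of `n` with all
parts in `[2, M]`. -/
noncomputable def countIncrement (M : ℕ) : ℤ⟦X⟧ :=
  (1 - X) * partSeries (Icc 2 M)

/-- The series `U_L` such that `surplus (L + 1) - surplus L = surplusGain L * X ^ (L + 2)`. -/
noncomputable def surplusGain (L : ℕ) : ℤ⟦X⟧ :=
  (1 - 2 * X + 2 * X ^ 3 - X ^ (L + 3)) * partSeries (Icc 2 (L + 3))

theorem countIncrement_succ {M : ℕ} (hM : 1 ≤ M) :
    countIncrement (M + 1) = countIncrement M + countIncrement (M + 1) * X ^ (M + 1) := by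
  rw [countIncrement, countIncrement, ← partSeries_Icc_succ (M := M) two_pos (by omega)]
  ring

theorem surplus_succ (L : ℕ) : surplus (L + 1) = surplus L + surplusGain L * X ^ (L + 2) := by
  rw [surplus, surplus, surplusGain, ← partSeries_Icc_succ (M := L + 2) two_pos (by omega)]
  ring

theorem surplusGain_eq (L : ℕ) :
    surplusGain L =
      countIncrement (L + 2) + surplus L * X + surplusGain L * X ^ (L + 3) := by
  rw [surplusGain, surplus, countIncrement, ← partSeries_Icc_succ (M := L + 2) two_pos (by omega)]
  ring

theorem surplusGain_succ (L : ℕ) :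
    surplusGain (L + 1) = surplusGain L +
      (countIncrement (L + 3) + surplusGain (L + 1) * X) * X ^ (L + 3) := by
  rw [surplusGain, surplusGain, countIncrement,
    ← partSeries_Icc_succ (M := L + 3) two_pos (by omega)]
  ring

section Recurrence

variable {F F' E : ℤ⟦X⟧} {m : ℕ}

theorem coeff_eq_of_lt_shift (h : F' = F + E * X ^ m) {n : ℕ} (hn : n < m) :
    coeff n F' = coeff n F := by
  rw [h, map_add, coeff_mul_X_pow', if_neg (by omega), add_zero]

theorem coeff_eq_add_of_shift_le (h : F' = F + E * X ^ m) {n : ℕ} (hn : m ≤ n) :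
    coeff n F' = coeff n F + coeff (n - m) E := by
  rw [h, map_add, coeff_mul_X_pow', if_pos hn]

theorem coeff_eq_sum_range_div (hm : 0 < m) (h : F' = F + F' * X ^ m) (n : ℕ) :
    coeff n F' = ∑ j ∈ range (n / m + 1), coeff (n - m * j) F := by
  induction n using Nat.strong_induction_on with
  | _ n ih =>
    rcases lt_or_ge n m with hn | hn
    · simp [coeff_eq_of_lt_shift h hn, Nat.div_eq_of_lt hn]
    · have hdiv : n / m = (n - m) / m + 1 := Nat.div_eq_sub_div hm hn
      rw [coeff_eq_add_of_shift_le h hn, ih (n - m) (by omega), hdiv,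
        sum_range_succ' _ ((n - m) / m + 1), mul_zero, tsub_zero, add_comm]
      simp only [mul_add, mul_one, Nat.sub_sub, add_comm]

theorem le_coeff_of_window {k b : ℕ} {c : ℤ} (hm : 0 < m) (h : F' = F + F' * X ^ m)
    (hkb : k + m ≤ b) (hF : ∀ n, b ≤ n → 0 ≤ coeff n F)
    (hwindow : ∀ n ∈ Ico k b, c ≤ coeff n F') (n : ℕ) (hn : k ≤ n) : c ≤ coeff n F' := by
  induction n using Nat.strong_induction_on with
  | _ n ih =>
    rcases lt_or_ge n b with hb | hb
    · exact hwindow n (mem_Ico.2 ⟨hn, hb⟩)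
    · rw [coeff_eq_add_of_shift_le h (by omega)]
      linarith [hF n hb, ih (n - m) (by omega) (by omega)]

/-- The coefficients of `F` are at least `lo` from degree `k` on, and, once the degree also reaches
`s`, at least `hi`. The reserve `hi - lo` pays for a single negative coefficient of a series added
in a later step. -/
def TwoLevelBound (F : ℤ⟦X⟧) (k s : ℕ) (lo hi : ℤ) : Prop :=
  ∀ n, k ≤ n → lo ≤ coeff n F ∧ (s ≤ n → hi ≤ coeff n F)

theorem TwoLevelBound.succ {k t : ℕ} {lo hi : ℤ} (hF : TwoLevelBound F k (m + t) lo hi)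
    (h : F' = F + E * X ^ m) (ht : lo - hi ≤ coeff t E)
    (hE : ∀ j, j ≠ t → (∀ i, k ≤ i → i < m + j → lo ≤ coeff i F') → 0 ≤ coeff j E) :
    TwoLevelBound F' k (m + t + 1) lo hi := by
  intro n
  induction n using Nat.strong_induction_on with
  | _ n ih =>
    intro hn
    obtain ⟨hlo, hhi⟩ := hF n hn
    rcases lt_or_ge n m with hnm | hnm
    · exact ⟨coeff_eq_of_lt_shift h hnm ▸ hlo, by omega⟩
    · rw [coeff_eq_add_of_shift_le h hnm]
      by_cases hnt : n - m = t
      · rw [hnt]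
        exact ⟨by linarith [hhi (by omega)], by omega⟩
      · have := hE (n - m) hnt fun i hi hin => (ih i (by omega) hi).1
        exact ⟨by linarith, fun hs => by linarith [hhi (by omega)]⟩

end Recurrence

/-- The polynomial with the given coefficients, lowest degree first, as a power series. -/
noncomputable def ofCoeffs (c : List ℤ) : ℤ⟦X⟧ := mk fun n => c.getD n 0

theorem ofCoeffs_nil : ofCoeffs [] = 0 := by
  ext; simp [ofCoeffs]

theorem ofCoeffs_cons (x : ℤ) (c : List ℤ) : ofCoeffs (x :: c) = C x + X * ofCoeffs c := by
  ext n
  cases n <;> simp [ofCoeffs, coeff_succ_X_mul, coeff_succ_C, -eq_intCast]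

/-- The rational function `(∑ cᵢ Xⁱ) / ∏ a ∈ l, (1 - X ^ a)` for distinct `a ≠ 0`. The denominator
is given by a list since its factors are put in one at a time, the last entry first, and only for
suitable orders do the intermediate quotients have eventually nonnegative coefficients. -/
noncomputable def ratSeries (c : List ℤ) (l : List ℕ) : ℤ⟦X⟧ :=
  ofCoeffs c * partSeries l.toFinset

/-- The coefficients of `ratSeries c l`, in a form which the kernel can evaluate. -/
def ratCoeff (c : List ℤ) : List ℕ → ℕ → ℤ
  | [], n => c.getD n 0
  | a :: l, n => ∑ j ∈ range (n / a + 1), ratCoeff c l (n - a * j)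

theorem ratSeries_cons {c : List ℤ} {a : ℕ} {l : List ℕ} (hl : (0 :: a :: l).Nodup) :
    ratSeries c (a :: l) = ratSeries c l + ratSeries c (a :: l) * X ^ a := by
  obtain ⟨h0, hal⟩ := List.nodup_cons.1 hl
  rw [ratSeries, ratSeries, List.toFinset_cons,
    partSeries_eq_mul_insert (S := l.toFinset) (by simpa using h0) (by simpa using hal.notMem)]
  ring

theorem coeff_ratSeries (c : List ℤ) (l : List ℕ) (hl : (0 :: l).Nodup) (n : ℕ) :
    coeff n (ratSeries c l) = ratCoeff c l n := by
  induction l generalizing n with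
  | nil =>
    have hone : partSeries ∅ = 1 := by simpa using partSeries_mul_prod (notMem_empty 0)
    simp [ratSeries, ratCoeff, hone, ofCoeffs]
  | cons a l ih =>
    have ha : 0 < a := by grind
    simp only [coeff_eq_sum_range_div ha (ratSeries_cons hl), ih (by grind), ratCoeff]

theorem le_coeff_ratSeries_cons {c : List ℤ} {a k b : ℕ} {l : List ℕ} {x : ℤ}
    (hl : (0 :: a :: l).Nodup) (hkb : k + a ≤ b)
    (htail : ∀ n, b ≤ n → 0 ≤ coeff n (ratSeries c l))
    (hwindow : ∀ n ∈ Ico k b, x ≤ ratCoeff c (a :: l) n) :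
    ∀ n, k ≤ n → x ≤ coeff n (ratSeries c (a :: l)) :=
  le_coeff_of_window (by grind) (ratSeries_cons hl) hkb htail
    fun n hn => (coeff_ratSeries c _ hl n).symm ▸ hwindow n hn

theorem coeff_partSeries_mul_X_pow_nonneg (S : Finset ℕ) (m n : ℕ) :
    0 ≤ coeff n (partSeries S * X ^ m) := by
  rw [coeff_mul_X_pow']
  split_ifs
  exacts [coeff_partSeries_nonneg S _, le_rfl]

theorem coeff_one_sub_X_mul_partSeries_two_three_five_nonneg {n : ℕ} (hn : 2 ≤ n) :
    0 ≤ coeff n ((1 - X) * partSeries {2, 3, 5}) := by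
  have decomposition : (1 - X) * partSeries {2, 3, 5} =
      partSeries {5} - X + partSeries {6} * X ^ 2 + partSeries {5, 6} * X ^ 12 := by
    have hone : partSeries {2, 3, 5, 6} *
        ((1 - X ^ 2) * (1 - X ^ 3) * (1 - X ^ 5) * (1 - X ^ 6)) = 1 := by
      simpa [mul_assoc] using partSeries_mul_prod (S := {2, 3, 5, 6}) (by decide)
    rw [partSeries_eq_mul_insert (S := {5}) (a := 3) (by decide) (by decide),
      partSeries_eq_mul_insert (S := {3, 5}) (a := 2) (by decide) (by decide),
      partSeries_eq_mul_insert (S := {6}) (a := 5) (by decide) (by decide),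
      partSeries_eq_mul_insert (S := {5, 6}) (a := 3) (by decide) (by decide),
      partSeries_eq_mul_insert (S := {3, 5, 6}) (a := 2) (by decide) (by decide),
      partSeries_eq_mul_insert (S := {2, 3, 5}) (a := 6) (by decide) (by decide),
      show insert 6 {2, 3, 5} = ({2, 3, 5, 6} : Finset ℕ) by decide]
    linear_combination - X * hone
  rw [decomposition, map_add, map_add, map_sub, coeff_X, if_neg (by omega), sub_zero]
  linarith [coeff_partSeries_nonneg {5} n, coeff_partSeries_mul_X_pow_nonneg {6} 2 n,
    coeff_partSeries_mul_X_pow_nonneg {5, 6} 12 n]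

theorem coeff_partSeries_singleton_le_one {a : ℕ} (ha : a ≠ 0) (n : ℕ) :
    coeff n (partSeries {a}) ≤ 1 := by
  have hrec : partSeries {a} = 1 + partSeries {a} * X ^ a := by
    have hinv := partSeries_mul_prod (S := {a}) (by simpa using ha.symm)
    rw [prod_singleton] at hinv
    linear_combination hinv
  induction n using Nat.strong_induction_on with
  | _ n ih =>
    rcases lt_or_ge n a with hn | hn
    · rw [coeff_eq_of_lt_shift hrec hn, coeff_one]
      split_ifs <;> simp
    · rw [coeff_eq_add_of_shift_le hrec hn, coeff_one, if_neg (by omega), zero_add]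
      exact ih (n - a) (by omega)

theorem one_le_coeff_partSeries_two_five {n : ℕ} (hn : 4 ≤ n) :
    1 ≤ coeff n (partSeries {2, 5}) := by
  have hrat (l : List ℕ) : partSeries l.toFinset = ratSeries [1] l := by
    simp [ratSeries, ofCoeffs_cons, ofCoeffs_nil]
  have htail (n : ℕ) (_ : 6 ≤ n) : 0 ≤ coeff n (ratSeries [1] [5]) :=
    hrat [5] ▸ coeff_partSeries_nonneg _ n
  exact hrat [2, 5] ▸ le_coeff_ratSeries_cons (by decide) le_rfl htail (by decide +kernel) n hn

theorem coeff_surplusNumerator_mul_partSeries_two_three_five_nonneg {n : ℕ} (hn : 6 ≤ n) :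
    0 ≤ coeff n ((2 * X ^ 2 - 1 - X ^ 7) * partSeries {2, 3, 5}) := by
  have decomposition : (2 * X ^ 2 - 1 - X ^ 7) * partSeries {2, 3, 5} =
      -partSeries {3} + partSeries {2, 5} * X ^ 2 := by
    rw [partSeries_eq_mul_insert (S := {2, 5}) (a := 3) (by decide) (by decide),
      partSeries_eq_mul_insert (S := {3}) (a := 5) (by decide) (by decide),
      partSeries_eq_mul_insert (S := {5, 3}) (a := 2) (by decide) (by decide),
      show insert 2 {5, 3} = ({2, 3, 5} : Finset ℕ) by decide,
      show insert 3 {2, 5} = ({2, 3, 5} : Finset ℕ) by decide]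
    ring
  rw [decomposition, map_add, map_neg, coeff_mul_X_pow', if_pos (by omega)]
  linarith [coeff_partSeries_singleton_le_one three_ne_zero n,
    one_le_coeff_partSeries_two_five (n := n - 2) (by omega)]

theorem ofCoeffs_one_neg_one : ofCoeffs [1, -1] = 1 - X := by
  simp only [ofCoeffs_cons, ofCoeffs_nil, map_neg, map_one]; ring

theorem ofCoeffs_surplus_five :
    ofCoeffs [-1, 0, 2, 0, 0, 0, 0, -1] = 2 * X ^ 2 - 1 - X ^ 7 := by
  simp only [ofCoeffs_cons, ofCoeffs_nil, map_neg, map_one, map_zero, map_ofNat]; ring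

theorem countIncrement_seven : countIncrement 7 = ratSeries [1, -1] [6, 7, 4, 2, 3, 5] := by
  rw [countIncrement, ratSeries, ofCoeffs_one_neg_one]
  congr 2
  decide

theorem surplus_five :
    surplus 5 = ratSeries [-1, 0, 2, 0, 0, 0, 0, -1] [7, 6, 4, 2, 3, 5] := by
  rw [surplus, ratSeries, ofCoeffs_surplus_five]
  congr 2
  decide

theorem surplusGain_five :
    surplusGain 5 = ratSeries [1, -2, 0, 2, 0, 0, 0, 0, -1] [8, 7, 6, 5, 4, 3, 2] := by
  have hnum : ofCoeffs [1, -2, 0, 2, 0, 0, 0, 0, -1] = 1 - 2 * X + 2 * X ^ 3 - X ^ 8 := by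
    simp only [ofCoeffs_cons, ofCoeffs_nil, map_neg, map_one, map_zero, map_ofNat]; ring
  rw [surplusGain, ratSeries, hnum]
  congr 2
  decide

theorem twoLevelBound_countIncrement_seven : TwoLevelBound (countIncrement 7) 2 9 0 1 := by
  have h235 (n : ℕ) (hn : 2 ≤ n) : 0 ≤ coeff n (ratSeries [1, -1] [2, 3, 5]) := by
    simpa [ratSeries, ofCoeffs_one_neg_one]
      using coeff_one_sub_X_mul_partSeries_two_three_five_nonneg hn
  have h4 := le_coeff_ratSeries_cons (a := 4) (k := 2) (x := 0) (by decide) le_rfl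
    (fun n hn => h235 n (by omega)) (by decide +kernel)
  have h7 := le_coeff_ratSeries_cons (a := 7) (k := 2) (x := 0) (by decide) le_rfl
    (fun n hn => h4 n (by omega)) (by decide +kernel)
  rw [countIncrement_seven]
  exact fun n hn =>
    ⟨le_coeff_ratSeries_cons (by decide) le_rfl (fun n hn => h7 n (by omega))
      (by decide +kernel) n hn,
    le_coeff_ratSeries_cons (by decide) le_rfl (fun n hn => h7 n (by omega))
      (by decide +kernel) n⟩

theorem three_le_coeff_surplus_five {n : ℕ} (hn : 16 ≤ n) : 3 ≤ coeff n (surplus 5) := by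
  let c : List ℤ := [-1, 0, 2, 0, 0, 0, 0, -1]
  have h235 (n : ℕ) (hn : 6 ≤ n) : 0 ≤ coeff n (ratSeries c [2, 3, 5]) := by
    simpa [c, ratSeries, ofCoeffs_surplus_five]
      using coeff_surplusNumerator_mul_partSeries_two_three_five_nonneg hn
  have h4 := le_coeff_ratSeries_cons (a := 4) (k := 10) (x := 0) (by decide) le_rfl
    (fun n hn => h235 n (by omega)) (by decide +kernel)
  have h6 := le_coeff_ratSeries_cons (a := 6) (k := 10) (x := 0) (by decide) le_rfl
    (fun n hn => h4 n (by omega)) (by decide +kernel)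
  rw [surplus_five]
  exact le_coeff_ratSeries_cons (by decide) le_rfl (fun n hn => h6 n (by omega))
    (by decide +kernel) n hn

theorem twoLevelBound_surplusGain_five : TwoLevelBound (surplusGain 5) 2 10 0 2 := by
  have htail (n : ℕ) (hn : 17 ≤ n) : 0 ≤ coeff n (countIncrement 7 + surplus 5 * X) := by
    obtain ⟨n, rfl⟩ : ∃ m, n = m + 1 := ⟨n - 1, by omega⟩
    rw [map_add, coeff_succ_mul_X]
    linarith [(twoLevelBound_countIncrement_seven (n + 1) (by omega)).1,
      three_le_coeff_surplus_five (n := n) (by omega)]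
  have hcoeff (n : ℕ) : coeff n (surplusGain 5) = _ :=
    surplusGain_five ▸ coeff_ratSeries _ _ (by decide) n
  refine fun n hn => ⟨?_, ?_⟩
  · refine le_coeff_of_window (b := 17) (by omega) (surplusGain_eq 5) (by omega) htail ?_ n hn
    simp only [hcoeff]
    decide +kernel
  · refine le_coeff_of_window (b := 18) (by omega) (surplusGain_eq 5) (by omega)
      (fun n hn => htail n (by omega)) ?_ n
    simp only [hcoeff]
    decide +kernel

theorem constantCoeff_countIncrement (M : ℕ) : constantCoeff (countIncrement M) = 1 := by
  simp [countIncrement, constantCoeff_partSeries]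

theorem constantCoeff_surplusGain (L : ℕ) : constantCoeff (surplusGain L) = 1 := by
  simp [surplusGain, constantCoeff_partSeries]

theorem neg_one_le_coeff_one_countIncrement (M : ℕ) : -1 ≤ coeff 1 (countIncrement M) := by
  rw [countIncrement, sub_mul, one_mul, map_sub, coeff_succ_X_mul, coeff_zero_eq_constantCoeff,
    constantCoeff_partSeries]
  linarith [coeff_partSeries_nonneg (Icc 2 M) 1]

theorem neg_two_le_coeff_one_surplusGain (L : ℕ) : -2 ≤ coeff 1 (surplusGain L) := by
  have hzero : constantCoeff (surplus L) = -1 := by simp [surplus, constantCoeff_partSeries]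
  rw [coeff_eq_of_lt_shift (surplusGain_eq L) (by omega), map_add, coeff_succ_mul_X,
    coeff_zero_eq_constantCoeff, hzero]
  linarith [neg_one_le_coeff_one_countIncrement (L + 2)]

theorem twoLevelBound_countIncrement {M : ℕ} (hM : 7 ≤ M) :
    TwoLevelBound (countIncrement M) 2 (M + 2) 0 1 := by
  induction M, hM using Nat.le_induction with
  | base => exact twoLevelBound_countIncrement_seven
  | succ M hM ih =>
    refine ih.succ (m := M + 1) (t := 1) (countIncrement_succ (by omega))
      (neg_one_le_coeff_one_countIncrement _) fun j hj ihj => ?_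
    rcases Nat.eq_zero_or_pos j with rfl | hpos
    · simp [constantCoeff_countIncrement]
    · exact ihj j (by omega) (by omega)

theorem twoLevelBound_surplusGain {L : ℕ} (hL : 5 ≤ L) :
    TwoLevelBound (surplusGain L) 2 (L + 5) 0 2 := by
  induction L, hL using Nat.le_induction with
  | base => exact twoLevelBound_surplusGain_five
  | succ L hL ih =>
    have hG (j : ℕ) (hj : 2 ≤ j) : 0 ≤ coeff j (countIncrement (L + 3)) :=
      (twoLevelBound_countIncrement (by omega) j hj).1
    refine ih.succ (m := L + 3) (t := 2) (surplusGain_succ L) ?_ fun j hj ihj => ?_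
    · rw [map_add, coeff_succ_mul_X]
      linarith [hG 2 le_rfl, neg_two_le_coeff_one_surplusGain (L + 1)]
    · rw [map_add]
      match j with
      | 0 => simp [constantCoeff_countIncrement]
      | 1 =>
        rw [coeff_succ_mul_X, coeff_zero_eq_constantCoeff, constantCoeff_surplusGain]
        linarith [neg_one_le_coeff_one_countIncrement (L + 3)]
      | j + 2 =>
        rw [coeff_succ_mul_X]
        exact add_nonneg (hG _ (by omega)) (ihj (j + 1) (by omega) (by omega))

theorem twoLevelBound_surplus {L : ℕ} (hL : 5 ≤ L) :
    TwoLevelBound (surplus L) 16 (L + 3) 1 3 := by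
  induction L, hL using Nat.le_induction with
  | base =>
    intro n hn
    have hthree := three_le_coeff_surplus_five hn
    exact ⟨by linarith, fun _ => hthree⟩
  | succ L hL ih =>
    refine ih.succ (m := L + 2) (t := 1) (surplus_succ L) (neg_two_le_coeff_one_surplusGain L)
      fun j hj _ => ?_
    rcases Nat.eq_zero_or_pos j with rfl | hpos
    · simp [constantCoeff_surplusGain]
    · exact (twoLevelBound_surplusGain hL j (by omega)).1

theorem stmt_18_general (L : ℕ) (hL : 5 ≤ L) (N : ℕ) (hN : 16 ≤ N) :
    Nat.card {p : N.Partition // InCStar2 L p} > Nat.card {p : N.Partition // InD2 L p} := by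
  have hsurplus := (twoLevelBound_surplus hL N hN).1
  rw [← natCard_inCStar2_sub_natCard_inD2 (by omega) (by omega)] at hsurplus
  omega

theorem stmt_18 (L : ℕ) (hL1 : 5 ≤ L) (hL2 : L ≤ 10)
    (N : ℕ) (hN : L * (L + 3) / 2 + 2 ≤ N) :
    Nat.card {p : N.Partition // InCStar2 L p} > Nat.card {p : N.Partition // InD2 L p} := by
  have hmono : 5 * (5 + 3) ≤ L * (L + 3) := by gcongr
  exact stmt_18_general L hL1 N (by omega)
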